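/- The set of values produced by the construction functions on Exp is exactly the set of rE-normal terms: for every t : Exp, t ∈ Set.range normE if and only if there is no u : Exp with rE t u (equivalently, t contains no subterm of the form Plus v Zero or Plus Zero v). -/

import Mathlib

/-- Arithmetic expressions. -/
inductive Exp : Type
  | Zero : Exp
  | One : Exp
  | Opp : Exp → Exp
  | Plus : Exp → Exp → Exp
deriving DecidableEq

/-- The construction function for `Plus`. -/
def plusC : Exp → Exp → Exp
  | Exp.Zero, u => u
  | t, Exp.Zero => t
  | t, u => Exp.Plus t u

/-- The normalization function associated to the construction functions. -/
def normE : Exp → Exp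
  | Exp.Zero => Exp.Zero
  | Exp.One => Exp.One
  | Exp.Opp t => Exp.Opp (normE t)
  | Exp.Plus t u => plusC (normE t) (normE u)

/-- The rewrite relation erasing neutral `Zero`s, closed under contexts. -/
inductive rE : Exp → Exp → Prop
  | plusZero (t : Exp) : rE (Exp.Plus t Exp.Zero) t
  | zeroPlus (t : Exp) : rE (Exp.Plus Exp.Zero t) t
  | opp {t t' : Exp} : rE t t' → rE (Exp.Opp t) (Exp.Opp t')
  | plusL {t t' : Exp} (u : Exp) : rE t t' → rE (Exp.Plus t u) (Exp.Plus t' u)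
  | plusR {t t' : Exp} (u : Exp) : rE t t' → rE (Exp.Plus u t) (Exp.Plus u t')

theorem plusC_ne {t u : Exp} (ht : t ≠ Exp.Zero) (hu : u ≠ Exp.Zero) :
    plusC t u = Exp.Plus t u := by
  cases t <;> cases u <;> simp_all [plusC]

theorem plusC_zero (t : Exp) : plusC t Exp.Zero = t := by
  cases t <;> simp [plusC]

theorem normE_normal (s : Exp) : ∀ u, ¬ rE (normE s) u := by
  induction s with
  | Zero => intro u h; cases h
  | One => intro u h; cases h
  | Opp t ih =>
    intro u h
    simp only [normE] at h
    cases h with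
    | opp h => exact ih _ h
  | Plus a b iha ihb =>
    intro u h
    simp only [normE] at h
    by_cases ha : normE a = Exp.Zero
    · rw [ha] at h
      exact ihb u (by simpa [plusC] using h)
    by_cases hb : normE b = Exp.Zero
    · rw [hb, plusC_zero] at h
      exact iha u h
    rw [plusC_ne ha hb] at h
    generalize normE a = x at *
    generalize normE b = y at *
    cases h with
    | plusZero => exact hb rfl
    | zeroPlus => exact ha rfl
    | plusL _ h => exact iha _ h
    | plusR _ h => exact ihb _ h

theorem normE_of_normal (t : Exp) (h : ∀ u, ¬ rE t u) : normE t = t := by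
  induction t with
  | Zero => rfl
  | One => rfl
  | Opp t ih =>
    simp only [normE]
    rw [ih fun u hu => h _ (rE.opp hu)]
  | Plus a b iha ihb =>
    simp only [normE]
    rw [iha fun u hu => h _ (rE.plusL b hu), ihb fun u hu => h _ (rE.plusR a hu)]
    apply plusC_ne
    · rintro rfl; exact h _ (rE.zeroPlus _)
    · rintro rfl; exact h _ (rE.plusZero _)

theorem range_normE_eq_rE_normal (t : Exp) :
    t ∈ Set.range normE ↔ ¬∃ u, rE t u := by
  constructor
  · rintro ⟨s, rfl⟩ ⟨u, hu⟩
    exact normE_normal s u hu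
  · intro h
    exact ⟨t, normE_of_normal t fun u hu => h ⟨u, hu⟩⟩
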